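/- Let α ∈ [0,1/2) be a real number and let F be a graph such that there is a constant c₀ > 0 with ex(b,F) ≤ c₀·b^{1+α} for every positive integer b. Then there exist constants C > 0 and N such that for every integer n > N, f_{F,K_4}(n) ≤ C · n^{1/(3-2α)} · (log n)^{6/(3-2α)}. -/

import Mathlib

/-!
The proof is random: the host graph is a random blow-up of a pseudorandom `K₄`-free graph built on
the lines of a Hermitian unital.

Over `𝔽_{q²}` the affine Hermitian unital has at most `q³` points and about `q⁴` lines, each with at
least `q` points, and two lines share at most one point. It contains no O'Nan configuration, that
is, no four lines meeting pairwise in six distinct unital points; this comes down to a Gram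
determinant of isotropic vectors (`onan_core`, `unital_exists`). Colour each flag with one of two
colours, at random, and join two lines when they meet in a unital point with different colours. In
a `K₄` no three lines can be concurrent, since that would need three colours, so a `K₄` would be an
O'Nan configuration; the graph is therefore `K₄`-free (`colourGraph_K4_free`). By a union bound one
colouring makes every set `X` of at least `100 q²` lines span degree sum at least `|X|² / (64 q)`
(`exists_colouring`, `colourGraph_dense`).

This local density gives containers (`exists_container`, `card_containers_le`): there are at most
`(|L| + 2) ^ r` sets of at most `100 q²` lines, with `r` of order `q log n`, such that whenever `t`
lines, with repetition, span at most `c₀ t ^ (1 + a)` edges, at least half of them lie in one of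
these sets. An `F`-free set of vertices of a blow-up has this property by the hypothesis on the
Turán number. A random map `Fin n → L` sends fewer than `t / 2` indices into every container
(`exists_sparse_map`), so the pullback graph on `Fin n` is `K₄`-free and has no `F`-independent set
with more than `t` vertices.

The constraints are `t ≳ q (log n)²`, `t ≳ n / q²` and `t ^ (1 - a) ≳ c₀ q (log n)²`. With `x` the
claimed bound and `q` a prime of order `x ^ (1 - a) / (log n)³`, so that `q² x` is of order `n`,
they all hold for `t` a constant multiple of `x`; the spare factor `log n` absorbs `c₀`.
-/

/-- `G` contains a copy of `F` as a (not necessarily induced) subgraph, i.e. there is an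
injective graph homomorphism from `F` to `G`. -/
def ContainsCopy {α β : Type*} (F : SimpleGraph α) (G : SimpleGraph β) : Prop :=
  ∃ f : α → β, Function.Injective f ∧ ∀ ⦃a b : α⦄, F.Adj a b → G.Adj (f a) (f b)

/-- The `F`-independence number of a finite graph `G`: the maximum size of a set `S` of
vertices such that the induced subgraph `G[S]` contains no copy of `F`. -/
noncomputable def fIndepNum {α β : Type*} [Fintype β] (F : SimpleGraph α) (G : SimpleGraph β) :
    ℕ :=
  sSup {k | ∃ S : Finset β, S.card = k ∧ ¬ ContainsCopy F (G.induce (S : Set β))}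

/-- `f_{F,H}(n)`: the minimum of the `F`-independence number over all `H`-free graphs on
`n` vertices. -/
noncomputable def minFIndep {α γ : Type*} (F : SimpleGraph α) (H : SimpleGraph γ) (n : ℕ) : ℕ :=
  sInf {k | ∃ G : SimpleGraph (Fin n), ¬ ContainsCopy H G ∧ fIndepNum F G = k}

/-- The Turán number `ex(n, F)`: the maximum number of edges of an `F`-free graph on `n`
vertices. -/
noncomputable def turanNum (n : ℕ) {α : Type*} (F : SimpleGraph α) : ℕ :=
  sSup {k | ∃ G : SimpleGraph (Fin n), ¬ ContainsCopy F G ∧ k = Nat.card G.edgeSet}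

/-! ### The Hermitian unital -/

/-- Absence of O'Nan configurations, in coordinates. Here `s` plays the role of the conjugation
`x ↦ x ^ p`, and line `i` is `y = mᵢ x + bᵢ`. The points `(x₁, y₁)`, `(x₂, y₂)`, `(x₃, y₃)` are the
vertices of the triangle formed by lines `1`, `2`, `3`, with `(xᵢ, yᵢ)` opposite line `i`; the point
`(z₁₂, u₁₂)` is the intersection of the side through vertices `1` and `2` with line `4`, and so on.

All six points lie on the unital, that is, are isotropic for the Hermitian form
`⟨P, Q⟩ = x_P s(x_Q) - y_P - s(y_Q)`. If `wᵢ` is the value of the equation of line `4` at vertex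
`i`, then `w₂P₁ - w₁P₂` represents the point of the side on line `4`, and its isotropy reads
`w₂ s(w₁) ⟨P₁, P₂⟩ + w₁ s(w₂) ⟨P₂, P₁⟩ = 0`. The three such relations together force
`⟨P₁,P₂⟩⟨P₂,P₃⟩⟨P₃,P₁⟩ + ⟨P₂,P₁⟩⟨P₃,P₂⟩⟨P₁,P₃⟩ = 0`. The left side is the Gram determinant of three
isotropic vectors, hence equals `- det * s(det)` for their coordinate determinant `det`, so the
triangle is degenerate. -/
lemma onan_core {K : Type*} [Field K] (s : K →+* K)
    {x1 x2 x3 y1 y2 y3 z12 z13 z23 u12 u13 u23 m1 m2 m3 m4 b1 b2 b3 b4 : K}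
    (h1 : x1 * s x1 = y1 + s y1) (h2 : x2 * s x2 = y2 + s y2) (h3 : x3 * s x3 = y3 + s y3)
    (k12 : z12 * s z12 = u12 + s u12) (k13 : z13 * s z13 = u13 + s u13)
    (k23 : z23 * s z23 = u23 + s u23)
    (l12 : y1 = m3 * x1 + b3) (l13 : y1 = m2 * x1 + b2)
    (l21 : y2 = m3 * x2 + b3) (l23 : y2 = m1 * x2 + b1)
    (l31 : y3 = m2 * x3 + b2) (l32 : y3 = m1 * x3 + b1)
    (t12 : u12 = m3 * z12 + b3) (t12' : u12 = m4 * z12 + b4)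
    (t13 : u13 = m2 * z13 + b2) (t13' : u13 = m4 * z13 + b4)
    (t23 : u23 = m1 * z23 + b1) (t23' : u23 = m4 * z23 + b4)
    (n1 : y1 ≠ m4 * x1 + b4) (n2 : y2 ≠ m4 * x2 + b4) (n3 : y3 ≠ m4 * x3 + b4)
    (n33 : y3 ≠ m3 * x3 + b3) (n11 : x1 ≠ x2) : False := by
  set w1 := y1 - (m4 * x1 + b4) with hw1
  set w2 := y2 - (m4 * x2 + b4) with hw2
  set w3 := y3 - (m4 * x3 + b4) with hw3
  have w1n : w1 ≠ 0 := sub_ne_zero.2 n1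
  have w2n : w2 ≠ 0 := sub_ne_zero.2 n2
  have w3n : w3 ≠ 0 := sub_ne_zero.2 n3
  -- isotropy of the point where the side through `(x, y)` and `(x', y')` meets line `4`
  have side : ∀ {x y x' y' z u m b : K}, x * s x = y + s y → x' * s x' = y' + s y' →
      z * s z = u + s u → y = m * x + b → y' = m * x' + b → u = m * z + b → u = m4 * z + b4 →
      (y' - (m4 * x' + b4)) * s (y - (m4 * x + b4)) * (x * s x' - y - s y') +
      (y - (m4 * x + b4)) * s (y' - (m4 * x' + b4)) * (x' * s x - y' - s y) = 0 := by
    intro x y x' y' z u m b h h' k l l' t t'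
    set w := y - (m4 * x + b4) with hw
    set w' := y' - (m4 * x' + b4) with hw'
    have e1 : w' * x - w * x' = (w' - w) * z := by
      have : (m - m4) * z + (b - b4) = 0 := by linear_combination t' - t
      rw [hw, hw', l, l']
      linear_combination (x - x') * this
    have e2 : w' * y - w * y' = (w' - w) * u := by
      rw [l, l', t]; linear_combination m * e1
    have e1s := congrArg s e1
    have e2s := congrArg s e2
    simp only [map_sub, map_mul] at e1s e2s
    linear_combination (s w' * w') * h + (s w * w) * h' - ((w'-w) * (s w' - s w)) * k
      - (s w' * s x - s w * s x') * e1 - ((w' - w) * z) * e1s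
      + (s w' - s w) * e2 + (w' - w) * e2s
  have A := side h1 h2 k12 l12 l21 t12 t12'
  have B := side h2 h3 k23 l23 l32 t23 t23'
  have C := side h3 h1 k13 l31 l13 t13 t13'
  rw [← hw1, ← hw2] at A
  rw [← hw2, ← hw3] at B
  rw [← hw3, ← hw1] at C
  -- the Gram determinant of the three vertices vanishes
  have gram : (x1 * s x2 - y1 - s y2) * (x2 * s x3 - y2 - s y3) * (x3 * s x1 - y3 - s y1) +
      (x2 * s x1 - y2 - s y1) * (x3 * s x2 - y3 - s y2) * (x1 * s x3 - y1 - s y3) = 0 := by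
    have hn : w1 * w2 * w3 * (s w1 * s w2 * s w3) ≠ 0 := by
      have : ∀ {w}, w ≠ 0 → s w ≠ 0 := fun {w} h => by simpa using h
      exact mul_ne_zero (mul_ne_zero (mul_ne_zero w1n w2n) w3n)
        (mul_ne_zero (mul_ne_zero (this w1n) (this w2n)) (this w3n))
    refine (mul_eq_zero.1 ?_).resolve_left hn
    generalize x1 * s x2 - y1 - s y2 = a at *
    generalize x2 * s x3 - y2 - s y3 = b at *
    generalize x3 * s x1 - y3 - s y1 = c at *
    generalize x2 * s x1 - y2 - s y1 = a' at *
    generalize x3 * s x2 - y3 - s y2 = b' at *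
    generalize x1 * s x3 - y1 - s y3 = c' at *
    linear_combination (w3 * s w2 * b) * (w1 * s w3 * c) * A - (w1 * s w2 * a') * (w1 * s w3 * c) * B
      + (w1 * s w2 * a') * (w2 * s w3 * b') * C
  have det : (x1 * (y2 - y3) - x2 * (y1 - y3) + x3 * (y1 - y2)) *
      s (x1 * (y2 - y3) - x2 * (y1 - y3) + x3 * (y1 - y2)) = 0 := by
    simp only [map_sub, map_mul, map_add]
    have g := gram
    generalize s x1 = X1 at *
    generalize s x2 = X2 at *
    generalize s x3 = X3 at *
    generalize s y1 = Y1 at *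
    generalize s y2 = Y2 at *
    generalize s y3 = Y3 at *
    linear_combination (-1 : K) * g
      - ((x2 * X2 - y2 - Y2) * (x3 * X3 - y3 - Y3)
        - (x2 * X3 - y2 - Y3) * (x3 * X2 - y3 - Y2)) * h1
      + ((x1 * X3 - y1 - Y3) * (x3 * X1 - y3 - Y1)) * h2
      + ((x1 * X2 - y1 - Y2) * (x2 * X1 - y2 - Y1)) * h3
  have hD : x1 * (y2 - y3) - x2 * (y1 - y3) + x3 * (y1 - y2) = 0 := by
    rcases mul_eq_zero.1 det with h | h
    · exact h
    · exact (map_eq_zero s).1 h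
  have : (x2 - x1) * (y3 - (m3 * x3 + b3)) = 0 := by
    rw [l12, l21] at hD
    linear_combination hD
  rcases mul_eq_zero.1 this with h | h
  · exact n11 (sub_eq_zero.1 h).symm
  · exact n33 (sub_eq_zero.1 h)

section Unital

variable {K : Type*} [Field K] [Fintype K] [DecidableEq K]

/-- The fibres of the trace `y ↦ y + y ^ p` have at most `p` elements, being root sets of a
polynomial of degree `p`. -/
lemma card_trace_fiber_le {p : ℕ} (hp : 2 ≤ p) (c : K) :
    (Finset.univ.filter fun y : K => y + y ^ p = c).card ≤ p := by
  classical
  open Polynomial in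
  let f : K[X] := X ^ p + X - C c
  have hd : f.natDegree = p := by
    have : (X ^ p + X - C c : K[X]) = X ^ p + (X - C c) := by ring
    simp only [f, this]
    rw [Polynomial.natDegree_add_eq_left_of_natDegree_lt] <;> simp
    omega
  have hf : f ≠ 0 := by
    intro h; rw [h] at hd; simp at hd; omega
  calc _ ≤ f.roots.toFinset.card := by
        apply Finset.card_le_card
        intro y hy
        simp only [Finset.mem_filter, Finset.mem_univ, true_and] at hy
        simp only [Multiset.mem_toFinset, Polynomial.mem_roots hf, Polynomial.IsRoot, f]
        simp [← hy]; ring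
    _ ≤ Multiset.card f.roots := Multiset.toFinset_card_le _
    _ ≤ p := hd ▸ Polynomial.card_roots' f

/-- In the field of `p ^ 2` elements, every nonzero element of the prime subfield (written as
`c ^ p = c`) is a norm `x ^ (p + 1)`: in the cyclic group `Kˣ` the image of the `(p + 1)`-th power
map has the same order as the kernel of the `(p - 1)`-th power map, which contains it. The fibres
then have `p + 1` elements, of which the bound `p` suffices here. -/
lemma card_norm_fiber_ge {p : ℕ} (hp : 2 ≤ p) (hK : Fintype.card K = p ^ 2) (c : K) (hc : c ≠ 0)
    (hcp : c ^ p = c) : p ≤ (Finset.univ.filter fun x : K => x * x ^ p = c).card := by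
  have hU : Nat.card Kˣ = (p + 1) * (p - 1) := by
    rw [Nat.card_units, Nat.card_eq_fintype_card, hK]
    obtain ⟨k, rfl⟩ := Nat.exists_eq_add_of_le hp
    have : 2 + k - 1 = k + 1 := by omega
    rw [this]
    have : (2 + k) ^ 2 = (2 + k + 1) * (k + 1) + 1 := by ring
    omega
  have hker := IsCyclic.card_powMonoidHom_ker Kˣ (p + 1)
  have hker' := IsCyclic.card_powMonoidHom_ker Kˣ (p - 1)
  have hran := IsCyclic.card_powMonoidHom_range Kˣ (p + 1)
  rw [hU] at hker hker' hran
  rw [Nat.gcd_mul_right_left] at hker hran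
  rw [Nat.gcd_mul_left_left] at hker'
  rw [Nat.mul_div_cancel_left _ (by omega)] at hran
  have hle : (powMonoidHom (p + 1) : Kˣ →* Kˣ).range ≤ (powMonoidHom (p - 1)).ker := by
    rintro _ ⟨u, rfl⟩
    rw [MonoidHom.mem_ker]
    simp only [powMonoidHom_apply]
    rw [← pow_mul, ← hU]
    exact pow_card_eq_one'
  have heq : (powMonoidHom (p + 1) : Kˣ →* Kˣ).range = (powMonoidHom (p - 1)).ker :=
    Subgroup.eq_of_le_of_card_ge hle (by rw [hker', hran])
  have hmem : Units.mk0 c hc ∈ (powMonoidHom (p - 1) : Kˣ →* Kˣ).ker := by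
    rw [MonoidHom.mem_ker]
    ext
    simp only [powMonoidHom_apply, Units.val_pow_eq_pow_val, Units.val_mk0, Units.val_one]
    have : c ^ (p - 1) * c = 1 * c := by
      rw [← pow_succ, Nat.sub_add_cancel (by omega), hcp, one_mul]
    exact mul_right_cancel₀ hc this
  rw [← heq] at hmem
  obtain ⟨x0, hx0⟩ := hmem
  have hx0' : (x0 : K) * (x0 : K) ^ p = c := by
    have := congrArg Units.val hx0
    simp only [powMonoidHom_apply, Units.val_pow_eq_pow_val, Units.val_mk0] at this
    rw [← this]; ring
  have hinj : p + 1 ≤ (Finset.univ.filter fun x : K => x * x ^ p = c).card := by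
    rw [← hker, Nat.card_eq_fintype_card, ← Finset.card_univ]
    refine Finset.card_le_card_of_injOn
      (fun u : (powMonoidHom (p + 1) : Kˣ →* Kˣ).ker => (x0 : K) * ((u : Kˣ) : K)) ?_ ?_
    · rintro ⟨u, hu⟩ -
      rw [MonoidHom.mem_ker] at hu
      have hu' : (u : K) ^ (p + 1) = 1 := by
        have := congrArg Units.val hu
        simpa using this
      simp only [Finset.coe_filter, Finset.mem_univ, true_and, Set.mem_ofPred_eq]
      rw [← hx0']
      linear_combination (x0 : K) * (x0 : K) ^ p * hu'
    · rintro ⟨u, hu⟩ - ⟨v, hv⟩ - h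
      have := mul_left_cancel₀ x0.ne_zero h
      exact Subtype.ext (Units.ext this)
  omega

end Unital

/-- The affine part of the Hermitian unital over `𝔽_{p²}`. The points are the pairs `(x, y)` with
`N(x) = Tr(y)`, and the lines `y = mx + b` are those with `Tr(b) + N(m) ≠ 0`. The latter condition
excludes exactly the tangent lines: substituting `x + s(m)` for `x` turns the condition that
`(x, mx + b)` is a point into `N(x) = Tr(b) + N(m)`. The last clause says that no four lines meet
pairwise in unital points without three of them being concurrent; only the non-concurrences that
are needed are listed. -/
theorem unital_exists (p : ℕ) (hp : p.Prime) :
    ∃ (P L : Type) (_ : Fintype P) (_ : Fintype L) (I : P → L → Prop),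
      Fintype.card P ≤ p ^ 3 ∧ p ^ 4 ≤ 2 * Fintype.card L ∧ Fintype.card L ≤ p ^ 4 ∧
      (∀ l, p ≤ Nat.card {x // I x l}) ∧
      (∀ l l' x y, l ≠ l' → I x l → I x l' → I y l → I y l' → x = y) ∧
      (∀ l1 l2 l3 l4 x12 x13 x14 x23 x24 x34,
        I x12 l1 → I x12 l2 → I x13 l1 → I x13 l3 → I x14 l1 → I x14 l4 →
        I x23 l2 → I x23 l3 → I x24 l2 → I x24 l4 → I x34 l3 → I x34 l4 →
        ¬ I x12 l3 → ¬ I x12 l4 → ¬ I x13 l4 → ¬ I x23 l4 → ¬ I x23 l1 → False) := by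
  classical
  have : Fact p.Prime := ⟨hp⟩
  let K := GaloisField p 2
  have : Fintype K := Fintype.ofFinite K
  have hK : Fintype.card K = p ^ 2 := by
    rw [← Nat.card_eq_fintype_card]; exact GaloisField.card p 2 (by norm_num)
  let s : K →+* K := frobenius K p
  have hsd : ∀ x, s x = x ^ p := fun x => rfl
  have hs : ∀ x, s (s x) = x := by
    intro x
    rw [hsd, hsd, ← pow_mul, ← sq, ← hK]
    exact FiniteField.pow_card x
  let P := {v : K × K // v.1 * s v.1 = v.2 + s v.2}
  let L := {v : K × K // v.2 + s v.2 + v.1 * s v.1 ≠ 0}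
  have key : ∀ g : K → K, (Finset.univ.filter fun v : K × K => v.2 + s v.2 = g v.1).card ≤ p ^ 3 := by
    intro g
    calc (Finset.univ.filter fun v : K × K => v.2 + s v.2 = g v.1).card
        ≤ ∑ x : K, (Finset.univ.filter fun y : K => y + y ^ p = g x).card := by
          rw [← Finset.card_sigma]
          refine Finset.card_le_card_of_injOn (fun v => ⟨v.1, v.2⟩) ?_ ?_
          · intro v hv
            simpa [hsd] using hv
          · rintro ⟨a, b⟩ - ⟨c, d⟩ - h
            simp at h
            simp [h.1, h.2]
      _ ≤ ∑ x : K, p := Finset.sum_le_sum fun x _ => card_trace_fiber_le hp.two_le _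
      _ = p ^ 3 := by simp [hK]; ring
  refine ⟨P, L, inferInstance, inferInstance, fun x l => x.1.2 = l.1.1 * x.1.1 + l.1.2,
    ?_, ?_, ?_, ?_, ?_, ?_⟩
  · rw [Fintype.card_subtype]
    refine le_trans (le_of_eq ?_) (key fun x => x * s x)
    congr 1; ext v; simp [eq_comm]
  · have h := key fun m => - (m * s m)
    have hc : Fintype.card L + (Finset.univ.filter fun v : K × K =>
        v.2 + s v.2 = -(v.1 * s v.1)).card = p ^ 4 := by
      rw [Fintype.card_subtype, add_comm]
      have := Finset.card_filter_add_card_filter_not (s := (Finset.univ : Finset (K × K)))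
        (fun v : K × K => v.2 + s v.2 = -(v.1 * s v.1))
      simp only [eq_neg_iff_add_eq_zero] at this ⊢
      rw [this, Finset.card_univ, Fintype.card_prod, hK]; ring
    have : 2 * p ^ 3 ≤ p ^ 4 := by
      rw [pow_succ p 3, mul_comm]; exact Nat.mul_le_mul_left _ hp.two_le
    omega
  · refine (Fintype.card_subtype_le _).trans ?_
    rw [Fintype.card_prod, hK]; exact le_of_eq (by ring)
  · rintro ⟨⟨m, b⟩, hl⟩
    simp only at hl
    have h := card_norm_fiber_ge hp.two_le hK _ hl (by
      rw [← hsd]; simp only [map_add, map_mul, hs]; ring)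
    refine h.trans ?_
    rw [Nat.card_eq_fintype_card, ← Fintype.card_coe]
    refine Fintype.card_le_of_injective (fun x => ⟨⟨⟨x.1 + s m, m * (x.1 + s m) + b⟩, ?_⟩, ?_⟩) ?_
    · have hx := x.2
      simp only [Finset.mem_filter, Finset.mem_univ, true_and, ← hsd] at hx
      simp only [map_add, map_mul, hs]
      linear_combination hx
    · simp
    · intro x y h
      have h' := congrArg (fun z => z.1.1.1) h
      exact Subtype.ext (add_right_cancel h')
  · rintro ⟨⟨m, b⟩, hl⟩ ⟨⟨m', b'⟩, hl'⟩ ⟨⟨x, y⟩, hx⟩ ⟨⟨x', y'⟩, hx'⟩ hne h1 h2 h3 h4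
    simp only at h1 h2 h3 h4
    have hxx : x = x' := by
      by_contra hxx
      have : (m - m') * (x - x') = 0 := by linear_combination h2 - h1 - h4 + h3
      rcases mul_eq_zero.1 this with h | h
      · have hm := sub_eq_zero.1 h
        subst hm
        exact hne (Subtype.ext (Prod.ext rfl (by linear_combination h2 - h1)))
      · exact hxx (sub_eq_zero.1 h)
    subst hxx
    exact Subtype.ext (Prod.ext rfl (h1.trans h3.symm))
  · rintro ⟨⟨m1, b1⟩, g1⟩ ⟨⟨m2, b2⟩, g2⟩ ⟨⟨m3, b3⟩, g3⟩ ⟨⟨m4, b4⟩, g4⟩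
      ⟨⟨x12, y12⟩, e12⟩ ⟨⟨x13, y13⟩, e13⟩ ⟨⟨x14, y14⟩, e14⟩ ⟨⟨x23, y23⟩, e23⟩ ⟨⟨x24, y24⟩, e24⟩
      ⟨⟨x34, y34⟩, e34⟩ i1 i2 i3 i4 i5 i6 i7 i8 i9 i10 i11 i12 n1 n2 n3 n4 n5
    simp only at *
    refine onan_core s (x1 := x23) (x2 := x13) (x3 := x12) e23 e13 e12 e34 e24 e14
      i8 i7 i4 i3 i2 i1 i11 i12 i9 i10 i5 i6 n4 n3 n2 n1 ?_
    rintro rfl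
    exact n5 ((i8.trans i4.symm).trans i3)

/-! ### The coloured graph on the lines -/

section Colouring

open Finset

/-- Lower tail for the number of agreements of a random two-colouring `χ` with `τ` on a set `Fl`:
the probability that `χ` agrees with `τ` on fewer than an eighth of `Fl` is at most `(3/4) ^ |Fl|`.
This is Markov's inequality for the random variable `(1/4) ^ (number of agreements)`, whose
expectation is `(5/8) ^ |Fl|`. -/
lemma card_bad_colouring_le {E : Type*} [Fintype E] [DecidableEq E] (Fl : Finset E) (τ : E → Bool) :
    ((univ.filter fun χ : E → Bool => 8 * (Fl.filter fun e => χ e = τ e).card < Fl.card).card : ℝ)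
      ≤ 2 ^ Fintype.card E * (3 / 4) ^ Fl.card := by
  -- the coordinates of `χ` are independent, so the generating function factorises
  have hsum : ∑ χ : E → Bool, (1 / 4 : ℝ) ^ (Fl.filter fun e => χ e = τ e).card
      = 2 ^ Fintype.card E * (5 / 8) ^ Fl.card := by
    have h1 : ∀ χ : E → Bool, (1 / 4 : ℝ) ^ (Fl.filter fun e => χ e = τ e).card
        = ∏ e, (if e ∈ Fl ∧ χ e = τ e then (1 / 4 : ℝ) else 1) := by
      intro χ
      rw [Finset.prod_ite, Finset.prod_const, Finset.prod_const_one, mul_one]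
      congr 2; ext e; simp
    simp_rw [h1]
    rw [← Fintype.prod_sum (fun e b => if e ∈ Fl ∧ b = τ e then (1 / 4 : ℝ) else 1)]
    have h2 : ∀ e, (∑ b : Bool, if e ∈ Fl ∧ b = τ e then (1 / 4 : ℝ) else 1)
        = 2 * (if e ∈ Fl then 5 / 8 else 1) := by
      intro e
      by_cases he : e ∈ Fl <;> cases hτ : τ e <;> simp [he] <;> norm_num
    simp_rw [h2]
    rw [Finset.prod_mul_distrib, Finset.prod_const, Finset.card_univ]
    congr 1
    rw [Finset.prod_ite, Finset.prod_const, Finset.prod_const_one, mul_one]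
    congr 2; ext e; simp
  have hle : ((univ.filter fun χ : E → Bool =>
      8 * (Fl.filter fun e => χ e = τ e).card < Fl.card).card : ℝ) * (5 / 6) ^ Fl.card
      ≤ 2 ^ Fintype.card E * (5 / 8) ^ Fl.card := by
    rw [← hsum, ← nsmul_eq_mul]
    refine le_trans (Finset.card_nsmul_le_sum _ _ _ fun χ hχ => ?_)
      (Finset.sum_le_sum_of_subset_of_nonneg (Finset.subset_univ _) fun _ _ _ => by positivity)
    have hc := (Finset.mem_filter.1 hχ).2
    -- `(5/6) ^ 8 ≤ 1/4`, and `(5/8) / (5/6) = 3/4`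
    calc (5 / 6 : ℝ) ^ Fl.card ≤ (5 / 6) ^ (8 * (Fl.filter fun e => χ e = τ e).card) :=
          pow_le_pow_of_le_one (by norm_num) (by norm_num) hc.le
      _ = ((5 / 6) ^ 8) ^ (Fl.filter fun e => χ e = τ e).card := by rw [pow_mul]
      _ ≤ (1 / 4) ^ _ := pow_le_pow_left₀ (by norm_num) (by norm_num) _
  have h56 : (0 : ℝ) < (5 / 6) ^ Fl.card := by positivity
  refine le_of_mul_le_mul_right (hle.trans (le_of_eq ?_)) h56
  rw [mul_assoc, ← mul_pow]; norm_num

/-- A two-colouring of the pairs (point, line) such that for every large set `X` of lines and every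
choice `σ` of one colour at each point, a positive proportion of the flags on `X` carry the chosen
colour. A uniformly random colouring works, by a union bound over all pairs `(X, σ)`. -/
lemma exists_colouring {P L : Type*} [Fintype P] [Fintype L] [DecidableEq P] [DecidableEq L]
    (I : P → L → Prop) [∀ x l, Decidable (I x l)] (q : ℕ) (hq : 0 < q)
    (hq' : (q : ℝ) * (9 / 10) ^ q ≤ 1)
    (hP : Fintype.card P ≤ q ^ 3) (hL : Fintype.card L ≤ q ^ 4)
    (hdeg : ∀ l, q ≤ (univ.filter fun x => I x l).card) :
    ∃ χ : P × L → Bool, ∀ X : Finset L, 100 * q ^ 2 ≤ X.card → ∀ σ : P → Bool,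
      q * X.card ≤ 8 * (univ.filter fun e : P × L =>
        (e.2 ∈ X ∧ I e.1 e.2) ∧ χ e = σ e.1).card := by
  by_contra hcon
  push Not at hcon
  -- the flags on the lines of `X`
  let Fl : Finset L → Finset (P × L) := fun X => univ.filter fun e => e.2 ∈ X ∧ I e.1 e.2
  have hFl : ∀ X, q * X.card ≤ (Fl X).card := by
    intro X
    have : (Fl X).card = ∑ l ∈ X, (univ.filter fun x => I x l).card := by
      rw [← Finset.card_sigma]
      refine Finset.card_bij' (fun e _ => ⟨e.2, e.1⟩) (fun e _ => (e.2, e.1)) ?_ ?_ ?_ ?_ <;>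
        simp [Fl]
    rw [this, mul_comm, ← smul_eq_mul]
    exact Finset.card_nsmul_le_sum _ _ _ fun l _ => hdeg l
  let Big : Finset (Finset L) := univ.filter fun X => 100 * q ^ 2 ≤ X.card
  let bad : Finset L × (P → Bool) → Finset (P × L → Bool) := fun Xσ =>
    univ.filter fun χ => 8 * ((Fl Xσ.1).filter fun e => χ e = Xσ.2 e.1).card < (Fl Xσ.1).card
  have hcover : (univ : Finset (P × L → Bool)) ⊆ (Big ×ˢ univ).biUnion bad := by
    intro χ _
    obtain ⟨X, hX, σ, h⟩ := hcon χ
    rw [Finset.mem_biUnion]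
    refine ⟨(X, σ), by simp [Big, hX], ?_⟩
    simp only [bad, Fl, Finset.mem_filter, Finset.mem_univ, true_and, Finset.filter_filter]
    exact h.trans_le (hFl X)
  have h1 : (2 : ℝ) ^ Fintype.card (P × L) ≤
      ∑ Xσ ∈ Big ×ˢ (univ : Finset (P → Bool)),
        (2 ^ Fintype.card (P × L) * (3 / 4) ^ (Fl Xσ.1).card) := by
    have := (Finset.card_le_card hcover).trans Finset.card_biUnion_le
    rw [Finset.card_univ, Fintype.card_fun, Fintype.card_bool] at this
    calc (2 : ℝ) ^ Fintype.card (P × L) ≤ ∑ Xσ ∈ Big ×ˢ (univ : Finset (P → Bool)),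
          ((bad Xσ).card : ℝ) := by exact_mod_cast this
      _ ≤ _ := Finset.sum_le_sum fun Xσ _ =>
        card_bad_colouring_le (Fl Xσ.1) (fun e => Xσ.2 e.1)
  rw [← Finset.mul_sum] at h1
  have h2 : (1 : ℝ) ≤ ∑ Xσ ∈ Big ×ˢ (univ : Finset (P → Bool)), (3 / 4 : ℝ) ^ (Fl Xσ.1).card := by
    have h0 : (0 : ℝ) < 2 ^ Fintype.card (P × L) := by positivity
    exact le_of_mul_le_mul_left (by simpa using h1) h0
  rw [Finset.sum_product] at h2
  simp only [Finset.sum_const, Finset.card_univ, Fintype.card_fun, Fintype.card_bool] at h2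
  set z : ℝ := (9 / 10) ^ q with hz
  have hz0 : 0 ≤ z := by positivity
  -- half of the exponent `q |X|` beats the `2 ^ |P|` choices of `σ`; the other half makes the sum
  -- over `X` converge, since `|L| (9/10) ^ q ≤ q ^ 3`
  have h3 : ∑ X ∈ Big, (2 ^ Fintype.card P) • (3 / 4 : ℝ) ^ (Fl X).card ≤
      ∑ X ∈ Big, (2 / 8 : ℝ) ^ (q ^ 3) * z ^ X.card := by
    refine Finset.sum_le_sum fun X hX => ?_
    have hX' : 100 * q ^ 2 ≤ X.card := (Finset.mem_filter.1 hX).2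
    have e1 : (3 / 4 : ℝ) ^ (Fl X).card ≤ (9 / 10) ^ (100 * q ^ 3) * z ^ X.card := by
      calc (3 / 4 : ℝ) ^ (Fl X).card ≤ (3 / 4) ^ (q * X.card) :=
            pow_le_pow_of_le_one (by norm_num) (by norm_num) (hFl X)
        _ ≤ ((9 / 10) * (9 / 10)) ^ (q * X.card) :=
            pow_le_pow_left₀ (by norm_num) (by norm_num) _
        _ = (9 / 10) ^ (q * X.card) * z ^ X.card := by rw [mul_pow, hz, ← pow_mul]
        _ ≤ _ := by
            refine mul_le_mul_of_nonneg_right ?_ (by positivity)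
            refine pow_le_pow_of_le_one (by norm_num) (by norm_num) ?_
            calc 100 * q ^ 3 = q * (100 * q ^ 2) := by ring
              _ ≤ _ := Nat.mul_le_mul_left _ hX'
    have e2 : (9 / 10 : ℝ) ^ (100 * q ^ 3) ≤ (1 / 8) ^ (q ^ 3) := by
      rw [pow_mul]
      exact pow_le_pow_left₀ (by norm_num) (by norm_num) _
    have e3 : (2 : ℝ) ^ Fintype.card P ≤ 2 ^ (q ^ 3) := pow_le_pow_right₀ (by norm_num) hP
    rw [nsmul_eq_mul]
    push_cast
    calc (2 : ℝ) ^ Fintype.card P * (3 / 4 : ℝ) ^ (Fl X).card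
        ≤ 2 ^ (q ^ 3) * ((1 / 8) ^ (q ^ 3) * z ^ X.card) := by
          refine mul_le_mul e3 (e1.trans ?_) (by positivity) (by positivity)
          exact mul_le_mul_of_nonneg_right e2 (by positivity)
      _ = _ := by rw [← mul_assoc, ← mul_pow]; norm_num
  have h4 : ∑ X ∈ Big, (2 / 8 : ℝ) ^ (q ^ 3) * z ^ X.card ≤ (2 / 8) ^ (q ^ 3) * 3 ^ (q ^ 3) := by
    rw [← Finset.mul_sum]
    refine mul_le_mul_of_nonneg_left ?_ (by positivity)
    calc ∑ X ∈ Big, z ^ X.card ≤ ∑ X : Finset L, z ^ X.card :=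
          Finset.sum_le_sum_of_subset_of_nonneg (Finset.subset_univ _) fun _ _ _ => by positivity
      _ = (z + 1) ^ Fintype.card L := by
          rw [← Fintype.sum_pow_mul_eq_add_pow]; simp
      _ ≤ (Real.exp z) ^ Fintype.card L :=
          pow_le_pow_left₀ (by positivity) (Real.add_one_le_exp z) _
      _ ≤ (Real.exp z) ^ (q ^ 4) :=
          pow_le_pow_right₀ (Real.one_le_exp hz0) hL
      _ = (Real.exp (q * z)) ^ (q ^ 3) := by
          rw [Real.exp_nat_mul, ← pow_mul]; congr 1; ring
      _ ≤ 3 ^ (q ^ 3) := by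
          refine pow_le_pow_left₀ (by positivity) ?_ _
          exact (Real.exp_le_exp.2 hq').trans (by linarith [Real.exp_one_lt_d9])
  have h5 : (2 / 8 : ℝ) ^ (q ^ 3) * 3 ^ (q ^ 3) < 1 := by
    rw [← mul_pow]
    exact pow_lt_one₀ (by norm_num) (by norm_num) (by positivity)
  linarith

/-- The graph on the lines in which two lines are adjacent when they share a point at which they
receive different colours. At each point this is a complete bipartite graph between the two colour
classes. -/
def colourGraph {P L : Type*} (I : P → L → Prop) (χ : P × L → Bool) : SimpleGraph L where
  Adj l l' := ∃ x, I x l ∧ I x l' ∧ χ (x, l) ≠ χ (x, l')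
  symm := ⟨fun _ _ ⟨x, h, h', hne⟩ => ⟨x, h', h, hne.symm⟩⟩
  loopless := ⟨fun _ ⟨_, _, _, hne⟩ => hne rfl⟩

/-- Large sets of lines span many edges. Applying the colouring hypothesis with `σ` the minority
colour at each point shows that both colour classes are large on average; the bipartite graphs at
distinct points are edge-disjoint because two lines share at most one point, so Cauchy–Schwarz
bounds the number of edges below. -/
lemma colourGraph_dense {P L : Type*} [Fintype P] [Fintype L] [DecidableEq P] [DecidableEq L]
    (I : P → L → Prop) [∀ x l, Decidable (I x l)] (q : ℕ) (hq : 0 < q)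
    (hP : Fintype.card P ≤ q ^ 3)
    (huniq : ∀ l l' x y, l ≠ l' → I x l → I x l' → I y l → I y l' → x = y)
    (χ : P × L → Bool) [DecidableRel (colourGraph I χ).Adj] (X : Finset L)
    (hX : ∀ σ : P → Bool,
      q * X.card ≤ 8 * (univ.filter fun e : P × L =>
        (e.2 ∈ X ∧ I e.1 e.2) ∧ χ e = σ e.1).card) :
    (X.card : ℝ) ^ 2 / (64 * q) ≤
      ∑ v ∈ X, ((X.filter fun w => (colourGraph I χ).Adj v w).card : ℝ) := by
  -- `A x b`: the lines of `X` through `x` with colour `b` there; `σ x`: the minority colour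
  let A : P → Bool → Finset L := fun x b => X.filter fun l => I x l ∧ χ (x, l) = b
  let σ : P → Bool := fun x => decide ((A x true).card ≤ (A x false).card)
  have hσ : ∀ x, (A x (σ x)).card ≤ (A x (!σ x)).card := by
    intro x
    by_cases h : (A x true).card ≤ (A x false).card
    · simp [σ, h]
    · simp only [σ, h, decide_false, Bool.not_false]; omega
  have hsum : q * X.card ≤ 8 * ∑ x, (A x (σ x)).card := by
    clear_value σ
    refine (hX σ).trans (Nat.mul_le_mul_left _ (le_of_eq ?_))
    rw [← Finset.card_sigma]
    refine Finset.card_bij' (fun e _ => ⟨e.1, e.2⟩) (fun e _ => (e.1, e.2)) ?_ ?_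
      (fun _ _ => rfl) (fun _ _ => rfl)
    · rintro ⟨x, l⟩ h
      simp only [Finset.mem_filter, Finset.mem_univ, true_and] at h
      simp only [A, Finset.mem_sigma, Finset.mem_filter, Finset.mem_univ, true_and]
      exact ⟨h.1.1, h.1.2, h.2⟩
    · rintro ⟨x, l⟩ h
      simp only [A, Finset.mem_sigma, Finset.mem_filter, Finset.mem_univ, true_and] at h
      simp only [Finset.mem_filter, Finset.mem_univ, true_and]
      exact ⟨⟨h.1, h.2.1⟩, h.2.2⟩
  clear_value σ
  have hpairs : ∑ x, (A x (σ x)).card ^ 2 ≤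
      ∑ v ∈ X, (X.filter fun w => (colourGraph I χ).Adj v w).card := by
    calc ∑ x, (A x (σ x)).card ^ 2 ≤ ∑ x, (A x (σ x) ×ˢ A x (!σ x)).card := by
          refine Finset.sum_le_sum fun x _ => ?_
          rw [Finset.card_product, sq]
          exact Nat.mul_le_mul_left _ (hσ x)
      _ ≤ _ := by
          rw [← Finset.card_sigma, ← Finset.card_sigma]
          refine Finset.card_le_card_of_injOn (fun e => ⟨e.2.1, e.2.2⟩) ?_ ?_
          · rintro ⟨x, l, l'⟩ h
            simp [A] at h
            simp only [coe_sigma, Set.mem_sigma_iff, Finset.mem_coe, Finset.mem_filter]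
            exact ⟨h.1.1, h.2.1, x, h.1.2.1, h.2.2.1, by rw [h.1.2.2, h.2.2.2]; simp⟩
          · rintro ⟨x, l, l'⟩ h ⟨y, m, m'⟩ h' heq
            simp [A] at h h'
            simp at heq
            obtain ⟨rfl, rfl⟩ := heq
            have hne : l ≠ l' := by
              rintro rfl
              have := h.1.2.2.symm.trans h.2.2.2
              simp at this
            have := huniq l l' x y hne h.1.2.1 h.2.2.1 h'.1.2.1 h'.2.2.1
            subst this; rfl
  have hcs : (∑ x, ((A x (σ x)).card : ℝ)) ^ 2 ≤ (q : ℝ) ^ 3 * ∑ x, ((A x (σ x)).card : ℝ) ^ 2 := by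
    have hP' : (Fintype.card P : ℝ) ≤ (q : ℝ) ^ 3 := by exact_mod_cast hP
    have hc := sq_sum_le_card_mul_sum_sq (s := (univ : Finset P))
      (f := fun x => ((A x (σ x)).card : ℝ))
    rw [Finset.card_univ] at hc
    exact hc.trans (mul_le_mul_of_nonneg_right hP' (Finset.sum_nonneg fun _ _ => sq_nonneg _))
  have hsum' : (q : ℝ) * X.card ≤ 8 * ∑ x, ((A x (σ x)).card : ℝ) := by exact_mod_cast hsum
  have hpairs' : ∑ x, ((A x (σ x)).card : ℝ) ^ 2 ≤
      ∑ v ∈ X, ((X.filter fun w => (colourGraph I χ).Adj v w).card : ℝ) := by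
    exact_mod_cast hpairs
  have hq0 : (0 : ℝ) < q := by exact_mod_cast hq
  refine le_trans ?_ hpairs'
  rw [div_le_iff₀ (by positivity)]
  have h6 : ((q : ℝ) * X.card) ^ 2 ≤ 64 * ((q : ℝ) ^ 3 * ∑ x, ((A x (σ x)).card : ℝ) ^ 2) := by
    have := pow_le_pow_left₀ (by positivity) hsum' 2
    nlinarith
  have : (q : ℝ) ^ 2 * (X.card : ℝ) ^ 2 ≤
      (q : ℝ) ^ 2 * ((∑ x, ((A x (σ x)).card : ℝ) ^ 2) * (64 * q)) := by
    nlinarith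
  exact le_of_mul_le_mul_left this (by positivity)

/-- A copy of `K₄` would be four lines meeting pairwise in unital points. No three are concurrent,
as only two colours are available at a point, so they would form an O'Nan configuration. -/
lemma colourGraph_K4_free {P L : Type*} (I : P → L → Prop)
    (huniq : ∀ l l' x y, l ≠ l' → I x l → I x l' → I y l → I y l' → x = y)
    (honan : ∀ l1 l2 l3 l4 x12 x13 x14 x23 x24 x34,
        I x12 l1 → I x12 l2 → I x13 l1 → I x13 l3 → I x14 l1 → I x14 l4 →
        I x23 l2 → I x23 l3 → I x24 l2 → I x24 l4 → I x34 l3 → I x34 l4 →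
        ¬ I x12 l3 → ¬ I x12 l4 → ¬ I x13 l4 → ¬ I x23 l4 → ¬ I x23 l1 → False)
    (χ : P × L → Bool) (f : Fin 4 → L)
    (hf : ∀ i j, i ≠ j → (colourGraph I χ).Adj (f i) (f j)) : False := by
  -- a point on two lines of the clique lies on no third: three lines would need three colours
  have key : ∀ i j k, i ≠ j → i ≠ k → j ≠ k → ∀ x, I x (f i) → I x (f j) → ¬ I x (f k) := by
    intro i j k hij hik hjk x hi hj hk
    have hcol : ∀ a b, a ≠ b → I x (f a) → I x (f b) → χ (x, f a) ≠ χ (x, f b) := by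
      intro a b hab ha hb
      obtain ⟨y, hya, hyb, hne⟩ := hf a b hab
      have := huniq _ _ x y (hf a b hab).ne ha hb hya hyb
      subst this; exact hne
    have h1 := hcol i j hij hi hj
    have h2 := hcol i k hik hi hk
    have h3 := hcol j k hjk hj hk
    revert h1 h2 h3
    cases χ (x, f i) <;> cases χ (x, f j) <;> cases χ (x, f k) <;> simp
  obtain ⟨x01, a1, a2, -⟩ := hf 0 1 (by decide)
  obtain ⟨x02, b1, b2, -⟩ := hf 0 2 (by decide)
  obtain ⟨x03, c1, c2, -⟩ := hf 0 3 (by decide)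
  obtain ⟨x12, d1, d2, -⟩ := hf 1 2 (by decide)
  obtain ⟨x13, e1, e2, -⟩ := hf 1 3 (by decide)
  obtain ⟨x23, g1, g2, -⟩ := hf 2 3 (by decide)
  exact honan (f 0) (f 1) (f 2) (f 3) x01 x02 x03 x12 x13 x23 a1 a2 b1 b2 c1 c2 d1 d2 e1 e2 g1 g2
    (key 0 1 2 (by decide) (by decide) (by decide) _ a1 a2)
    (key 0 1 3 (by decide) (by decide) (by decide) _ a1 a2)
    (key 0 2 3 (by decide) (by decide) (by decide) _ b1 b2)
    (key 1 2 3 (by decide) (by decide) (by decide) _ d1 d2)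
    (key 1 2 0 (by decide) (by decide) (by decide) _ d1 d2)

end Colouring

/-! ### Containers -/

section Containers

open Finset

/-- The vertices of `A` with fewer than `ε |A|` neighbours inside `A`. -/
noncomputable def lowPart {L : Type*} (G : SimpleGraph L) [DecidableRel G.Adj]
    (ε : ℝ) (A : Finset L) : Finset L :=
  A.filter fun v => ((A.filter fun w => G.Adj v w).card : ℝ) < ε * A.card

/-- The vertex sets reachable from the full vertex set in at most `k` steps, a step being either
passing to the `lowPart` or deleting the neighbourhood of one vertex. -/
noncomputable def containers {L : Type*} [Fintype L] [DecidableEq L] (G : SimpleGraph L) [DecidableRel G.Adj]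
    (ε : ℝ) : ℕ → Finset (Finset L)
  | 0 => {univ}
  | k + 1 => containers G ε k ∪ (containers G ε k).image (lowPart G ε) ∪
      ((univ : Finset L) ×ˢ containers G ε k).image fun vA => vA.2.filter fun w => ¬ G.Adj vA.1 w

lemma card_containers_le {L : Type*} [Fintype L] [DecidableEq L] (G : SimpleGraph L) [DecidableRel G.Adj]
    (ε : ℝ) (k : ℕ) :
    (containers G ε k).card ≤ (Fintype.card L + 2) ^ k := by
  induction k with
  | zero => simp [containers]
  | succ k ih =>
    have h1 := Finset.card_union_le (containers G ε k ∪ (containers G ε k).image (lowPart G ε))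
      (((univ : Finset L) ×ˢ containers G ε k).image fun vA => vA.2.filter fun w => ¬ G.Adj vA.1 w)
    have h2 := Finset.card_union_le (containers G ε k) ((containers G ε k).image (lowPart G ε))
    have h3 := Finset.card_image_le (s := containers G ε k) (f := lowPart G ε)
    have h4 := Finset.card_image_le (s := (univ : Finset L) ×ˢ containers G ε k)
      (f := fun vA => vA.2.filter fun w => ¬ G.Adj vA.1 w)
    rw [Finset.card_product, Finset.card_univ] at h4
    have h5 : (containers G ε (k + 1)).card ≤ (Fintype.card L + 2) * (containers G ε k).card := by
      rw [containers]
      linarith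
    calc _ ≤ _ := h5
      _ ≤ (Fintype.card L + 2) * (Fintype.card L + 2) ^ k := Nat.mul_le_mul_left _ ih
      _ = _ := by ring

lemma containers_mono {L : Type*} [Fintype L] [DecidableEq L] (G : SimpleGraph L) [DecidableRel G.Adj]
    {ε : ℝ} {k l : ℕ} (h : k ≤ l) : containers G ε k ⊆ containers G ε l := by
  induction h with
  | refl => exact subset_rfl
  | step _ ih =>
    refine ih.trans ?_
    intro A hA
    rw [containers]
    exact Finset.mem_union_left _ (Finset.mem_union_left _ hA)

/-- In a graph whose large sets are dense, a `lowPart` that is still large has at most half the size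
of `A`: its average inner degree is at least `2 ε` times its size, but every degree is below
`ε |A|`. -/
lemma card_lowPart {L : Type*} (G : SimpleGraph L) [DecidableRel G.Adj]
    {ε : ℝ} (hε : 0 < ε) {M : ℕ} (hM : 0 < M)
    (hG : ∀ X : Finset L, M ≤ X.card →
      2 * ε * (X.card : ℝ) ^ 2 ≤ ∑ v ∈ X, ((X.filter fun w => G.Adj v w).card : ℝ))
    (A : Finset L) (h : M ≤ (lowPart G ε A).card) : 2 * (lowPart G ε A).card ≤ A.card := by
  set B := lowPart G ε A with hB
  have hBA : B ⊆ A := Finset.filter_subset _ _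
  have h1 : ∑ v ∈ B, ((B.filter fun w => G.Adj v w).card : ℝ) ≤ B.card * (ε * A.card) := by
    rw [← nsmul_eq_mul]
    refine Finset.sum_le_card_nsmul _ _ _ fun v hv => ?_
    have hlt := (Finset.mem_filter.1 hv).2
    refine le_trans ?_ hlt.le
    exact_mod_cast Finset.card_le_card (Finset.filter_subset_filter _ hBA)
  have h2 := (hG B h).trans h1
  have hpos : (0 : ℝ) < ε * B.card := by
    have : (0 : ℝ) < B.card := by exact_mod_cast hM.trans_le h
    positivity
  have h3 : (ε * B.card) * (2 * (B.card : ℝ)) ≤ (ε * B.card) * A.card := by nlinarith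
  exact_mod_cast le_of_mul_le_mul_left h3 hpos

/-- Container lemma. Assume that large vertex sets of `G` are dense (`hG`) and that the pullback of
`G` along `h : ι → L` has few edges (`hdeg`). Then some reachable set of at most `M` vertices
captures almost all the indices that a given reachable set `A` does.

As long as `|A| > M`, one of two steps applies. If at most `γ` indices of `A` lie outside its
`lowPart`, pass to the `lowPart`: this costs at most `γ` indices and halves the set, so it occurs at
most `w` times. Otherwise one of these more than `γ` indices has degree at most `β` in the pullback
graph, while its image has at least `ε |A|` neighbours in `A`; deleting this neighbourhood costs at
most `β` indices and shrinks the set by a factor `1 - ε`, so the total number of steps is at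
most `r`. -/
lemma exists_container {L : Type*} [Fintype L] [DecidableEq L] (G : SimpleGraph L) [DecidableRel G.Adj]
    {ε : ℝ} (hε : 0 < ε) (hε' : ε ≤ 1 / 2) {M : ℕ} (hM : 0 < M)
    (hG : ∀ X : Finset L, M ≤ X.card →
      2 * ε * (X.card : ℝ) ^ 2 ≤ ∑ v ∈ X, ((X.filter fun w => G.Adj v w).card : ℝ))
    {ι : Type*} [Fintype ι] [DecidableEq ι] (h : ι → L) {β γ : ℝ} (hβ : 0 < β) (hγ : 0 < γ)
    (hdeg : ∑ i, ((univ.filter fun j => G.Adj (h i) (h j)).card : ℝ) ≤ β * γ)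
    (r : ℕ) : ∀ (w k : ℕ) (A : Finset L), A ∈ containers G ε k →
      (A.card : ℝ) * (1 - ε) ^ r ≤ M → A.card ≤ 2 ^ w →
      ∃ C ∈ containers G ε (k + r), C.card ≤ M ∧
        ((univ.filter fun i => h i ∈ A).card : ℝ) ≤
          (univ.filter fun i => h i ∈ C).card + r * β + w * γ := by
  induction r with
  | zero =>
    intro w k A hA hr hw
    refine ⟨A, hA, by simpa using hr, ?_⟩
    have : 0 ≤ (w : ℝ) * γ := by positivity
    simp; linarith
  | succ r ih =>
    intro w k A hA hr hw
    by_cases hAM : A.card ≤ M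
    · refine ⟨A, containers_mono G (by omega) hA, hAM, ?_⟩
      have : 0 ≤ (w : ℝ) * γ := by positivity
      have : 0 ≤ ((r + 1 : ℕ) : ℝ) * β := by positivity
      linarith
    push Not at hAM
    set B := lowPart G ε A with hB
    by_cases hcase : ((univ.filter fun i => h i ∈ A ∧ h i ∉ B).card : ℝ) ≤ γ
    · have hBmem : B ∈ containers G ε (k + 1) := by
        rw [containers]
        exact Finset.mem_union_left _ (Finset.mem_union_right _ (Finset.mem_image_of_mem _ hA))
      have hcount : ((univ.filter fun i => h i ∈ A).card : ℝ) ≤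
          (univ.filter fun i => h i ∈ B).card + γ := by
        have : (univ.filter fun i => h i ∈ A).card ≤ (univ.filter fun i => h i ∈ B).card +
            (univ.filter fun i => h i ∈ A ∧ h i ∉ B).card := by
          refine le_trans (Finset.card_le_card ?_) (Finset.card_union_le _ _)
          intro i hi
          simp only [Finset.mem_filter, Finset.mem_union, Finset.mem_univ, true_and] at hi ⊢
          tauto
        have : ((univ.filter fun i => h i ∈ A).card : ℝ) ≤ (univ.filter fun i => h i ∈ B).card +
            (univ.filter fun i => h i ∈ A ∧ h i ∉ B).card := by exact_mod_cast this
        linarith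
      obtain ⟨w, rfl⟩ : ∃ w', w = w' + 1 := by
        refine Nat.exists_eq_succ_of_ne_zero ?_
        rintro rfl
        simp at hw; omega
      by_cases hBM : B.card ≤ M
      · refine ⟨B, containers_mono G (by omega) hBmem, hBM, ?_⟩
        have h1 : 0 ≤ (w : ℝ) * γ := by positivity
        have h2 : 0 ≤ ((r + 1 : ℕ) : ℝ) * β := by positivity
        push_cast at h2 ⊢
        linarith
      · have hhalf := card_lowPart G hε hM hG A (le_of_not_ge hBM)
        rw [← hB] at hhalf
        have hhalf' : 2 * (B.card : ℝ) ≤ A.card := by exact_mod_cast hhalf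
        have hpow : 0 ≤ (1 - ε) ^ r := pow_nonneg (by linarith) _
        obtain ⟨C, hC, hCM, hCc⟩ := ih w (k + 1) B hBmem (by
          refine le_trans ?_ hr
          rw [pow_succ']
          have : (B.card : ℝ) ≤ A.card * (1 - ε) := by
            have : (0 : ℝ) ≤ A.card := by positivity
            nlinarith
          calc (B.card : ℝ) * (1 - ε) ^ r ≤ (A.card * (1 - ε)) * (1 - ε) ^ r :=
                mul_le_mul_of_nonneg_right this hpow
            _ = _ := by ring) (by rw [pow_succ] at hw; omega)
        refine ⟨C, by rwa [show k + (r + 1) = k + 1 + r by ring], hCM, ?_⟩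
        push_cast
        linarith
    · push Not at hcase
      obtain ⟨i, hi, hid⟩ : ∃ i ∈ univ.filter (fun i => h i ∈ A ∧ h i ∉ B),
          ((univ.filter fun j => G.Adj (h i) (h j)).card : ℝ) ≤ β := by
        by_contra hno
        push Not at hno
        have h1 := Finset.card_nsmul_le_sum (univ.filter fun i => h i ∈ A ∧ h i ∉ B)
          (fun i => ((univ.filter fun j => G.Adj (h i) (h j)).card : ℝ)) β
          fun i hi => (hno i hi).le
        have h2 : ∑ i ∈ univ.filter (fun i => h i ∈ A ∧ h i ∉ B),
            ((univ.filter fun j => G.Adj (h i) (h j)).card : ℝ) ≤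
            ∑ i, ((univ.filter fun j => G.Adj (h i) (h j)).card : ℝ) :=
          Finset.sum_le_sum_of_subset_of_nonneg (Finset.subset_univ _) fun _ _ _ => by positivity
        rw [nsmul_eq_mul] at h1
        nlinarith
      simp only [Finset.mem_filter, Finset.mem_univ, true_and] at hi
      obtain ⟨hiA, hiB⟩ := hi
      have hiD : ε * A.card ≤ ((A.filter fun w => G.Adj (h i) w).card : ℝ) := by
        by_contra hlt
        push Not at hlt
        exact hiB (Finset.mem_filter.2 ⟨hiA, hlt⟩)
      set A' := A.filter fun w => ¬ G.Adj (h i) w with hA'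
      have hA'mem : A' ∈ containers G ε (k + 1) := by
        rw [containers]
        refine Finset.mem_union_right _ (Finset.mem_image.2 ⟨(h i, A), ?_, rfl⟩)
        simp [hA]
      have hsplit := Finset.card_filter_add_card_filter_not (s := A) (fun w => G.Adj (h i) w)
      have hcard : (A'.card : ℝ) ≤ A.card * (1 - ε) := by
        have : ((A.filter fun w => G.Adj (h i) w).card : ℝ) + A'.card = A.card := by
          exact_mod_cast hsplit
        linarith
      have hpow : 0 ≤ (1 - ε) ^ r := pow_nonneg (by linarith) _
      obtain ⟨C, hC, hCM, hCc⟩ := ih w (k + 1) A' hA'mem (by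
        refine le_trans ?_ hr
        rw [pow_succ']
        calc (A'.card : ℝ) * (1 - ε) ^ r ≤ (A.card * (1 - ε)) * (1 - ε) ^ r :=
              mul_le_mul_of_nonneg_right hcard hpow
          _ = _ := by ring) ((Finset.card_filter_le _ _).trans hw)
      refine ⟨C, by rwa [show k + (r + 1) = k + 1 + r by ring], hCM, ?_⟩
      have hcount : ((univ.filter fun i => h i ∈ A).card : ℝ) ≤
          (univ.filter fun j => h j ∈ A').card + (univ.filter fun j => G.Adj (h i) (h j)).card := by
        have : (univ.filter fun i => h i ∈ A).card ≤ (univ.filter fun j => h j ∈ A').card +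
            (univ.filter fun j => G.Adj (h i) (h j)).card := by
          refine le_trans (Finset.card_le_card ?_) (Finset.card_union_le _ _)
          intro j hj
          simp only [hA', Finset.mem_filter, Finset.mem_union, Finset.mem_univ, true_and] at hj ⊢
          tauto
        exact_mod_cast this
      push_cast
      linarith

end Containers

/-! ### Random maps -/

section Sampling

open Finset

/-- A map `Fin n → L` with fewer than `s` indices in each member of a small family of small sets.
For a uniformly random map, the number of indices in `C` has exponential moment
`𝔼 2 ^ N = (1 + |C| / |L|) ^ n`, so a union bound and Markov's inequality apply. -/
lemma exists_sparse_map {L : Type*} [Fintype L] [DecidableEq L] (𝒞 : Finset (Finset L)) (n M s : ℕ)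
    (hM : ∀ C ∈ 𝒞, C.card ≤ M)
    (hlt : (𝒞.card : ℝ) * ((Fintype.card L : ℝ) + M) ^ n < 2 ^ s * (Fintype.card L : ℝ) ^ n) :
    ∃ f : Fin n → L, ∀ C ∈ 𝒞, (univ.filter fun i => f i ∈ C).card < s := by
  by_contra hcon
  push Not at hcon
  let bad : Finset L → Finset (Fin n → L) := fun C =>
    univ.filter fun f => s ≤ (univ.filter fun i => f i ∈ C).card
  have hbad : ∀ C ∈ 𝒞, ((bad C).card : ℝ) * 2 ^ s ≤ ((Fintype.card L : ℝ) + M) ^ n := by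
    intro C hC
    have hsum : ∑ f : Fin n → L, (2 : ℝ) ^ (univ.filter fun i => f i ∈ C).card
        = ((Fintype.card L : ℝ) + C.card) ^ n := by
      have h1 : ∀ f : Fin n → L, (2 : ℝ) ^ (univ.filter fun i => f i ∈ C).card
          = ∏ i, (if f i ∈ C then (2 : ℝ) else 1) := by
        intro f
        rw [Finset.prod_ite, Finset.prod_const, Finset.prod_const_one, mul_one]
      simp_rw [h1]
      rw [← Fintype.prod_sum (fun (_ : Fin n) l => if l ∈ C then (2 : ℝ) else 1)]
      rw [Finset.prod_const, Finset.card_univ, Fintype.card_fin]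
      congr 1
      have : ∀ l, (if l ∈ C then (2 : ℝ) else 1) = 1 + if l ∈ C then 1 else 0 := by
        intro l; split_ifs <;> norm_num
      simp_rw [this]
      rw [Finset.sum_add_distrib]; simp
    calc ((bad C).card : ℝ) * 2 ^ s = (bad C).card • (2 : ℝ) ^ s := by rw [nsmul_eq_mul]
      _ ≤ ∑ f ∈ bad C, (2 : ℝ) ^ (univ.filter fun i => f i ∈ C).card :=
          Finset.card_nsmul_le_sum _ _ _ fun f hf =>
            pow_le_pow_right₀ (by norm_num) (Finset.mem_filter.1 hf).2
      _ ≤ ∑ f : Fin n → L, (2 : ℝ) ^ (univ.filter fun i => f i ∈ C).card :=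
          Finset.sum_le_sum_of_subset_of_nonneg (Finset.subset_univ _) fun _ _ _ => by positivity
      _ = _ := hsum
      _ ≤ _ := by
          refine pow_le_pow_left₀ (by positivity) ?_ _
          have : (C.card : ℝ) ≤ M := by exact_mod_cast hM C hC
          linarith
  have hcover : (univ : Finset (Fin n → L)) ⊆ 𝒞.biUnion bad := by
    intro f _
    obtain ⟨C, hC, h⟩ := hcon f
    exact Finset.mem_biUnion.2 ⟨C, hC, Finset.mem_filter.2 ⟨Finset.mem_univ _, h⟩⟩
  have h1 := (Finset.card_le_card hcover).trans Finset.card_biUnion_le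
  rw [Finset.card_univ, Fintype.card_fun, Fintype.card_fin] at h1
  have h2 : (Fintype.card L : ℝ) ^ n ≤ ∑ C ∈ 𝒞, ((bad C).card : ℝ) := by exact_mod_cast h1
  have h3 : 2 ^ s * (Fintype.card L : ℝ) ^ n ≤ 𝒞.card * ((Fintype.card L : ℝ) + M) ^ n := by
    calc 2 ^ s * (Fintype.card L : ℝ) ^ n ≤ 2 ^ s * ∑ C ∈ 𝒞, ((bad C).card : ℝ) :=
          mul_le_mul_of_nonneg_left h2 (by positivity)
      _ = ∑ C ∈ 𝒞, ((bad C).card : ℝ) * 2 ^ s := by rw [mul_comm, Finset.sum_mul]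
      _ ≤ 𝒞.card • ((Fintype.card L : ℝ) + M) ^ n := Finset.sum_le_card_nsmul _ _ _ hbad
      _ = _ := by rw [nsmul_eq_mul]
  linarith

end Sampling

/-! ### From parameters to the bound -/

section Assembly

open Finset

lemma card_edgeSet_le_turanNum {V : Type*} (F : SimpleGraph V) {t : ℕ} (H : SimpleGraph (Fin t))
    (hH : ¬ ContainsCopy F H) : Nat.card H.edgeSet ≤ turanNum t F := by
  refine le_csSup ⟨Nat.card (Sym2 (Fin t)), ?_⟩ ⟨H, hH, rfl⟩
  rintro k ⟨H', -, rfl⟩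
  exact Nat.card_le_card_of_injective _ Subtype.val_injective

/-- The combinatorial heart: if the parameters satisfy the stated inequalities, then a random
`n`-vertex blow-up of the coloured unital graph is a `K₄`-free graph in which every set of `t + 1`
vertices contains `F`. Indeed the induced subgraph on an `F`-free set of `t` vertices has at most
`ex(t, F)` edges, so a container would capture at least `s` of these vertices, which the sampling
rules out. -/
lemma minFIndep_le_of_params {V : Type*} (a : ℝ) (F : SimpleGraph V) (c₀ : ℝ)
    (hF : ∀ b : ℕ, 0 < b → (turanNum b F : ℝ) ≤ c₀ * (b : ℝ) ^ (1 + a))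
    {q n t r w s : ℕ} {β γ : ℝ} (hqp : q.Prime) (hq' : (q : ℝ) * (9 / 10) ^ q ≤ 1) (ht : 0 < t)
    (hw : q ^ 4 ≤ 2 ^ w) (hr : (q : ℝ) ^ 4 * (1 - 1 / (128 * q)) ^ r ≤ 1)
    (hβ : 0 < β) (hγ : 0 < γ) (hβγ : 2 * c₀ * (t : ℝ) ^ (1 + a) ≤ β * γ)
    (hloss : s + r * β + w * γ ≤ t)
    (hsamp : ((q : ℝ) ^ 4 + 2) ^ r * Real.exp (200 * n / q ^ 2) < 2 ^ s) :
    minFIndep F (⊤ : SimpleGraph (Fin 4)) n ≤ t := by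
  classical
  have hq : 0 < q := hqp.pos
  have hq0 : (0 : ℝ) < q := by exact_mod_cast hq
  have hq1 : (1 : ℝ) ≤ q := by exact_mod_cast hq
  obtain ⟨P, L, _, _, I, hP, hL, hL', hdeg, huniq, honan⟩ := unital_exists q hqp
  obtain ⟨χ, hχ⟩ := exists_colouring I q hq hq' hP hL' (fun l => by
    have := hdeg l
    rwa [Nat.card_eq_fintype_card, Fintype.card_subtype] at this)
  set G := colourGraph I χ with hGdef
  have hGd : ∀ X : Finset L, 100 * q ^ 2 ≤ X.card →
      2 * (1 / (128 * q) : ℝ) * (X.card : ℝ) ^ 2 ≤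
        ∑ v ∈ X, ((X.filter fun w => G.Adj v w).card : ℝ) := by
    intro X hX
    refine le_trans (le_of_eq ?_) (colourGraph_dense I q hq hP huniq χ X (hχ X hX))
    field_simp; ring
  set ε : ℝ := 1 / (128 * q) with hε
  have hε0 : 0 < ε := by positivity
  have hε1 : ε ≤ 1 / 2 := by
    rw [hε]; exact one_div_le_one_div_of_le (by norm_num) (by linarith)
  set M := 100 * q ^ 2 with hMdef
  have hM : 0 < M := by positivity
  have hLc : (q : ℝ) ^ 4 ≤ 2 * Fintype.card L := by exact_mod_cast hL
  have hLc' : (Fintype.card L : ℝ) ≤ (q : ℝ) ^ 4 := by exact_mod_cast hL'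
  have hLpos : (0 : ℝ) < Fintype.card L := by
    have : (0 : ℝ) < (q : ℝ) ^ 4 := by positivity
    linarith
  obtain ⟨f, hf⟩ := exists_sparse_map ((containers G ε r).filter fun C => C.card ≤ M) n M s
    (fun C hC => (Finset.mem_filter.1 hC).2) (by
      have h1 : (((containers G ε r).filter fun C => C.card ≤ M).card : ℝ) ≤
          ((q : ℝ) ^ 4 + 2) ^ r := by
        have := (Finset.card_filter_le (containers G ε r) fun C => C.card ≤ M).trans
          (card_containers_le G ε r)
        calc _ ≤ ((Fintype.card L : ℝ) + 2) ^ r := by exact_mod_cast this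
          _ ≤ _ := pow_le_pow_left₀ (by positivity) (by linarith) _
      have h2 : (Fintype.card L : ℝ) + M ≤ Fintype.card L * Real.exp (200 / q ^ 2) := by
        have h3 : (M : ℝ) ≤ Fintype.card L * (200 / q ^ 2) := by
          rw [hMdef]; push_cast
          rw [mul_div_assoc', le_div_iff₀ (by positivity)]
          nlinarith
        have h4 := Real.add_one_le_exp (200 / (q : ℝ) ^ 2)
        nlinarith
      calc _ ≤ ((q : ℝ) ^ 4 + 2) ^ r * (Fintype.card L * Real.exp (200 / q ^ 2)) ^ n :=
            mul_le_mul h1 (pow_le_pow_left₀ (by positivity) h2 _) (by positivity) (by positivity)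
        _ = ((q : ℝ) ^ 4 + 2) ^ r * Real.exp (200 * n / q ^ 2) * (Fintype.card L : ℝ) ^ n := by
            rw [mul_pow, ← Real.exp_nat_mul]; ring_nf
        _ < _ := mul_lt_mul_of_pos_right hsamp (by positivity))
  have hK4 : ¬ ContainsCopy (⊤ : SimpleGraph (Fin 4)) (G.comap f) := by
    rintro ⟨e, -, he⟩
    exact colourGraph_K4_free I huniq honan χ (fun i => f (e i)) fun i j hij => he hij
  have hmin : minFIndep F (⊤ : SimpleGraph (Fin 4)) n ≤ fIndepNum F (G.comap f) :=
    Nat.sInf_le ⟨G.comap f, hK4, rfl⟩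
  refine hmin.trans (csSup_le' ?_)
  rintro k ⟨S, rfl, hS⟩
  by_contra hlt
  push Not at hlt
  obtain ⟨T, hTS, hT⟩ := Finset.exists_subset_card_eq hlt.le
  let g : Fin t ↪ Fin n := ((T.equivFinOfCardEq hT).symm.toEmbedding).trans
    (Function.Embedding.subtype _)
  have hgS : ∀ i, g i ∈ S := fun i => hTS ((T.equivFinOfCardEq hT).symm i).2
  let H : SimpleGraph (Fin t) := G.comap fun i => f (g i)
  have hH : ¬ ContainsCopy F H := by
    rintro ⟨e, hinj, he⟩
    refine hS ⟨fun v => ⟨g (e v), hgS _⟩, ?_, fun u v huv => he huv⟩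
    intro u v huv
    have hg := congrArg Subtype.val huv
    exact hinj (g.injective hg)
  have hdegsum : ∑ i : Fin t, ((univ.filter fun j => G.Adj (f (g i)) (f (g j))).card : ℝ) ≤
      β * γ := by
    have h1 : ∑ i : Fin t, (univ.filter fun j => G.Adj (f (g i)) (f (g j))).card =
        2 * Nat.card H.edgeSet := by
      rw [Nat.card_eq_fintype_card, ← SimpleGraph.edgeFinset_card,
        ← SimpleGraph.sum_degrees_eq_twice_card_edges]
      refine Finset.sum_congr rfl fun i _ => ?_
      rw [← SimpleGraph.card_neighborFinset_eq_degree]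
      congr 1; ext j; simp [H]
    have h2 : (Nat.card H.edgeSet : ℝ) ≤ c₀ * (t : ℝ) ^ (1 + a) :=
      le_trans (by exact_mod_cast card_edgeSet_le_turanNum F H hH) (hF t ht)
    calc ∑ i : Fin t, ((univ.filter fun j => G.Adj (f (g i)) (f (g j))).card : ℝ)
        = 2 * (Nat.card H.edgeSet : ℝ) := by exact_mod_cast h1
      _ ≤ _ := by linarith
  obtain ⟨C, hC, hCM, hCc⟩ := exists_container G hε0 hε1 hM hGd (fun i => f (g i)) hβ hγ hdegsum
    r w 0 univ (by simp [containers]) (by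
      rw [Finset.card_univ]
      have h1M : (1 : ℝ) ≤ M := by exact_mod_cast hM
      have : 0 ≤ (1 - ε) ^ r := pow_nonneg (by linarith) _
      nlinarith) (by rw [Finset.card_univ]; exact hL'.trans hw)
  rw [zero_add] at hC
  have hsmall := hf C (Finset.mem_filter.2 ⟨hC, hCM⟩)
  have hle : (univ.filter fun i : Fin t => f (g i) ∈ C).card ≤
      (univ.filter fun i => f i ∈ C).card := by
    refine Finset.card_le_card_of_injOn g ?_ g.injective.injOn
    intro i hi
    simpa using hi
  have hlt' : ((univ.filter fun i : Fin t => f (g i) ∈ C).card : ℝ) < s := by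
    exact_mod_cast hle.trans_lt hsmall
  simp only [Finset.mem_univ, Finset.filter_true, Finset.card_univ, Fintype.card_fin] at hCc
  linarith

end Assembly

/-! ### Choice of parameters -/

section Parameters

open Filter

lemma eventually_params (K q₀ : ℝ) : ∀ᶠ n : ℕ in atTop,
    K ≤ Real.log n ∧ q₀ * Real.log n ^ 3 ≤ (n : ℝ) ^ (1 / 6 : ℝ) := by
  have hlog : Tendsto (fun n : ℕ => Real.log n) atTop atTop :=
    Real.tendsto_log_atTop.comp tendsto_natCast_atTop_atTop
  refine (hlog.eventually_ge_atTop K).and ?_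
  have ho := (isLittleO_log_rpow_rpow_atTop (s := 1 / 6) 3 (by norm_num)).bound
    (c := 1 / (|q₀| + 1)) (by positivity)
  have ho' := tendsto_natCast_atTop_atTop (R := ℝ) |>.eventually ho
  filter_upwards [ho', hlog.eventually_ge_atTop 0] with n hn hl
  rw [Real.norm_of_nonneg (by positivity), Real.norm_of_nonneg (by positivity)] at hn
  have h3 : Real.log n ^ (3 : ℝ) = Real.log n ^ 3 := by
    rw [← Real.rpow_natCast]; norm_num
  rw [h3] at hn
  have hp : 0 < |q₀| + 1 := by positivity
  have h4 : (|q₀| + 1) * Real.log n ^ 3 ≤ (n : ℝ) ^ (1 / 6 : ℝ) := by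
    calc _ ≤ (|q₀| + 1) * (1 / (|q₀| + 1) * (n : ℝ) ^ (1 / 6 : ℝ)) :=
          mul_le_mul_of_nonneg_left hn hp.le
      _ = _ := by field_simp
  refine le_trans (mul_le_mul_of_nonneg_right ?_ (by positivity)) h4
  linarith [le_abs_self q₀]

end Parameters

set_option maxHeartbeats 1000000 in
theorem stmt1 {V : Type*} [Fintype V] (a : ℝ) (ha0 : 0 ≤ a) (ha1 : a < 1 / 2)
    (F : SimpleGraph V) (c₀ : ℝ) (hc₀ : 0 < c₀)
    (hF : ∀ b : ℕ, 0 < b → (turanNum b F : ℝ) ≤ c₀ * (b : ℝ) ^ (1 + a)) :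
    ∃ (C : ℝ) (N : ℕ), 0 < C ∧ ∀ n : ℕ, n > N →
      (minFIndep F (⊤ : SimpleGraph (Fin 4)) n : ℝ) ≤
        C * (n : ℝ) ^ ((1 : ℝ) / (3 - 2 * a)) * Real.log n ^ ((6 : ℝ) / (3 - 2 * a)) := by
  have hzq : ∀ᶠ q : ℕ in Filter.atTop, (q : ℝ) * (9 / 10) ^ q ≤ 1 :=
    (tendsto_self_mul_const_pow_of_lt_one (r := (9 / 10 : ℝ)) (by norm_num)
      (by norm_num)).eventually_le_const (by norm_num)
  obtain ⟨q₀, hq₀⟩ := Filter.eventually_atTop.1 hzq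
  obtain ⟨N, hN⟩ := Filter.eventually_atTop.1
    (eventually_params (200 + 600000 * c₀) (q₀ + 1))
  refine ⟨1601, N + 16, by norm_num, fun n hn => ?_⟩
  obtain ⟨hlog, hbig⟩ := hN n (by omega)
  have hn16 : (16 : ℝ) ≤ n := by exact_mod_cast (by omega : 16 ≤ n)
  have hn0 : (0 : ℝ) < n := by linarith
  set l := Real.log n with hl
  have hl200 : 200 ≤ l := by nlinarith
  have hl0 : 0 < l := by linarith
  have hlc : 600000 * c₀ ≤ l := by linarith
  have hd : 0 < 3 - 2 * a := by linarith
  -- `x` is the target bound, `y` the order of magnitude of `q`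
  set x : ℝ := (n : ℝ) ^ (1 / (3 - 2 * a)) * l ^ (6 / (3 - 2 * a)) with hx
  have hx0 : 0 < x := by positivity
  have hxpow : x ^ (3 - 2 * a) = n * l ^ 6 := by
    rw [hx, Real.mul_rpow (by positivity) (by positivity), ← Real.rpow_mul hn0.le,
      ← Real.rpow_mul hl0.le, div_mul_cancel₀ _ hd.ne', div_mul_cancel₀ _ hd.ne', Real.rpow_one]
    congr 1
    rw [← Real.rpow_natCast]; norm_num
  have hx3 : (n : ℝ) ^ (1 / 3 : ℝ) ≤ x := by
    have h1 : (n : ℝ) ^ (1 / 3 : ℝ) ≤ (n : ℝ) ^ (1 / (3 - 2 * a)) :=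
      Real.rpow_le_rpow_of_exponent_le (by linarith)
        (one_div_le_one_div_of_le hd (by linarith))
    have h2 : 1 ≤ l ^ (6 / (3 - 2 * a)) := Real.one_le_rpow (by linarith) (by positivity)
    calc _ ≤ _ := h1
      _ ≤ _ := le_mul_of_one_le_right (by positivity) h2
  have hx1 : 1 ≤ x := le_trans (Real.one_le_rpow (by linarith) (by norm_num)) hx3
  have hxa : (n : ℝ) ^ (1 / 6 : ℝ) ≤ x ^ (1 - a) := by
    calc (n : ℝ) ^ (1 / 6 : ℝ) = ((n : ℝ) ^ (1 / 3 : ℝ)) ^ (1 / 2 : ℝ) := by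
          rw [← Real.rpow_mul hn0.le]; norm_num
      _ ≤ x ^ (1 / 2 : ℝ) := Real.rpow_le_rpow (by positivity) hx3 (by norm_num)
      _ ≤ x ^ (1 - a) := Real.rpow_le_rpow_of_exponent_le hx1 (by linarith)
  have hxax : x ^ (1 - a) ≤ x := by
    calc x ^ (1 - a) ≤ x ^ (1 : ℝ) := Real.rpow_le_rpow_of_exponent_le hx1 (by linarith)
      _ = x := Real.rpow_one x
  set y : ℝ := x ^ (1 - a) / l ^ 3 with hy
  have hyl : y * l ^ 3 = x ^ (1 - a) := by rw [hy]; field_simp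
  have hyq₀ : (q₀ : ℝ) + 1 ≤ y := by
    rw [hy, le_div_iff₀ (by positivity)]; exact hbig.trans hxa
  have hy1 : 1 ≤ y := by
    have : (0 : ℝ) ≤ q₀ := by positivity
    linarith
  have hyx : y ^ 2 * x = n := by
    have h1 : (x ^ (1 - a)) ^ 2 * x = x ^ (3 - 2 * a) := by
      rw [← Real.rpow_natCast, ← Real.rpow_mul hx0.le]
      nth_rewrite 2 [← Real.rpow_one x]
      rw [← Real.rpow_add hx0]; congr 1; push_cast; ring
    rw [hy, div_pow, div_mul_eq_mul_div, h1, hxpow]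
    field_simp
  -- Bertrand's postulate
  obtain ⟨q, hqp, hqlo, hqhi⟩ := Nat.exists_prime_lt_and_le_two_mul ⌈y⌉₊
    (Nat.ceil_pos.2 (by linarith)).ne'
  have hqy : y ≤ q := (Nat.le_ceil y).trans (by exact_mod_cast hqlo.le)
  have hq4 : (q : ℝ) ≤ 4 * y := by
    have h1 : (q : ℝ) ≤ 2 * (⌈y⌉₊ : ℝ) := by exact_mod_cast hqhi
    have h2 := (Nat.ceil_lt_add_one (by linarith : 0 ≤ y)).le
    linarith
  have hq1 : (1 : ℝ) ≤ q := hy1.trans hqy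
  have hq0 : (0 : ℝ) < q := by linarith
  have hqn : (q : ℝ) ≤ n := by
    have : y ^ 2 ≤ n := by
      rw [← hyx]; exact le_mul_of_one_le_right (by positivity) hx1
    nlinarith
  have hexp : Real.exp l = n := Real.exp_log hn0
  have he4 : Real.exp 1 ≤ 2 ^ 2 := by linarith [Real.exp_one_lt_d9]
  set t := ⌈1600 * x⌉₊ with ht
  have htlo : 1600 * x ≤ t := Nat.le_ceil _
  have hthi : (t : ℝ) ≤ 1601 * x := by
    have := (Nat.ceil_lt_add_one (by positivity : 0 ≤ 1600 * x)).le
    linarith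
  have ht0 : (0 : ℝ) < t := by linarith
  set r := ⌈512 * (q * l)⌉₊ with hr
  have hrlo : 512 * (q * l) ≤ r := Nat.le_ceil _
  have hql : 1 ≤ q * l := by nlinarith
  have hrhi : (r : ℝ) ≤ 513 * (q * l) := by
    have := (Nat.ceil_lt_add_one (by positivity : 0 ≤ 512 * (q * l))).le
    linarith
  have hr0 : (0 : ℝ) < r := by linarith
  set w := ⌈8 * l⌉₊ with hw
  have hwlo : 8 * l ≤ w := Nat.le_ceil _
  have hwhi : (w : ℝ) ≤ 9 * l := by
    have := (Nat.ceil_lt_add_one (by positivity : 0 ≤ 8 * l)).le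
    linarith
  have hw0 : (0 : ℝ) < w := by linarith
  have hq4n : (q : ℝ) ^ 4 ≤ Real.exp (4 * l) := by
    have : Real.exp (4 * l) = (n : ℝ) ^ 4 := by
      rw [← hexp, ← Real.exp_nat_mul]; norm_num
    rw [this]; exact pow_le_pow_left₀ hq0.le hqn 4
  have hexp2 : ∀ m : ℕ, Real.exp ((m : ℝ) / 2) ≤ 2 ^ m := by
    intro m
    refine le_of_sq_le_sq ?_ (by positivity)
    rw [← Real.exp_nat_mul, ← pow_mul, mul_comm m 2, pow_mul]
    calc Real.exp ((2 : ℕ) * ((m : ℝ) / 2)) = Real.exp 1 ^ m := by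
          rw [← Real.exp_nat_mul]; congr 1; push_cast; ring
      _ ≤ _ := pow_le_pow_left₀ (Real.exp_pos _).le he4 _
  have hql2 : q * l ^ 3 ≤ 4 * x ^ (1 - a) := by
    rw [← hyl]
    have := mul_le_mul_of_nonneg_right hq4 (by positivity : 0 ≤ l ^ 3)
    linarith
  -- `s = t / 2`, and the two kinds of loss in the container argument get `t / 4` each
  have hmain : minFIndep F (⊤ : SimpleGraph (Fin 4)) n ≤ t := by
    refine minFIndep_le_of_params a F c₀ hF (q := q) (r := r) (w := w) (s := t / 2)
      (β := t / (4 * r)) (γ := t / (4 * w)) hqp (hq₀ q ?_) (by exact_mod_cast ht0) ?_ ?_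
      (by positivity) (by positivity) ?_ ?_ ?_
    · have : (q₀ : ℝ) ≤ q := by linarith
      exact_mod_cast this
    · have : (q : ℝ) ^ 4 ≤ 2 ^ w :=
        hq4n.trans ((Real.exp_le_exp.2 (by linarith)).trans (hexp2 w))
      exact_mod_cast this
    · have h1 : (1 - 1 / (128 * q) : ℝ) ^ r ≤ Real.exp (-(4 * l)) := by
        calc (1 - 1 / (128 * q) : ℝ) ^ r ≤ Real.exp (-(1 / (128 * q))) ^ r := by
              refine pow_le_pow_left₀ ?_ (Real.one_sub_le_exp_neg _) _
              rw [sub_nonneg, div_le_one (by positivity)]; linarith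
          _ = Real.exp (-(r / (128 * q))) := by
              rw [← Real.exp_nat_mul]; congr 1; ring
          _ ≤ _ := by
              refine Real.exp_le_exp.2 (neg_le_neg ?_)
              rw [le_div_iff₀ (by positivity)]; linarith
      calc (q : ℝ) ^ 4 * (1 - 1 / (128 * q)) ^ r ≤ Real.exp (4 * l) * Real.exp (-(4 * l)) := by
            refine mul_le_mul hq4n h1 (pow_nonneg ?_ _) (Real.exp_pos _).le
            rw [sub_nonneg, div_le_one (by positivity)]; linarith
        _ = 1 := by rw [← Real.exp_add]; simp
    · have h1 : (t : ℝ) ^ (1 + a) * (t : ℝ) ^ (1 - a) = t ^ 2 := by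
        rw [← Real.rpow_add ht0, ← Real.rpow_natCast]; congr 1; push_cast; ring
      have h2 : x ^ (1 - a) ≤ (t : ℝ) ^ (1 - a) :=
        Real.rpow_le_rpow hx0.le (by linarith) (by linarith)
      have h3 : 32 * c₀ * (r * w) ≤ (t : ℝ) ^ (1 - a) := by
        have hrw : (r : ℝ) * w ≤ 513 * (q * l) * (9 * l) :=
          mul_le_mul hrhi hwhi hw0.le (by positivity)
        have h4 : 32 * c₀ * (r * w) ≤ 32 * c₀ * (513 * (q * l) * (9 * l)) :=
          mul_le_mul_of_nonneg_left hrw (by positivity)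
        have h5 : 600000 * c₀ * (q * l ^ 2) ≤ l * (q * l ^ 2) :=
          mul_le_mul_of_nonneg_right hlc (by positivity)
        have h6 : 0 ≤ c₀ * (q * l ^ 2) := by positivity
        have h7 : 32 * c₀ * (513 * (q * l) * (9 * l)) = 147744 * (c₀ * (q * l ^ 2)) := by ring
        have h8 : l * (q * l ^ 2) = q * l ^ 3 := by ring
        have h9 : 600000 * c₀ * (q * l ^ 2) = 600000 * (c₀ * (q * l ^ 2)) := by ring
        rw [h7] at h4
        rw [h8, h9] at h5
        linarith
      rw [div_mul_div_comm, le_div_iff₀ (by positivity)]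
      have h5 : 0 < (t : ℝ) ^ (1 + a) := by positivity
      have h6 := mul_le_mul_of_nonneg_left h3 h5.le
      rw [h1] at h6
      linarith
    · have h1 : ((t / 2 : ℕ) : ℝ) ≤ t / 2 := Nat.cast_div_le
      have h2 : (r : ℝ) * (t / (4 * r)) = t / 4 := by field_simp
      have h3 : (w : ℝ) * (t / (4 * w)) = t / 4 := by field_simp
      rw [h2, h3]; linarith
    · have h1 : ((q : ℝ) ^ 4 + 2) ^ r ≤ Real.exp (r * (5 * l)) := by
        rw [Real.exp_nat_mul]
        refine pow_le_pow_left₀ (by positivity) ?_ _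
        have h5 : Real.exp (5 * l) = Real.exp (4 * l) * n := by
          rw [← hexp, ← Real.exp_add]; congr 1; ring
        have h6 : 1 ≤ Real.exp (4 * l) := Real.one_le_exp (by linarith)
        rw [h5]; nlinarith
      have h2 : 200 * (n : ℝ) / q ^ 2 ≤ 200 * x := by
        rw [div_le_iff₀ (by positivity), ← hyx]
        have : y ^ 2 ≤ (q : ℝ) ^ 2 := pow_le_pow_left₀ (by linarith) hqy 2
        nlinarith
      have h3 : (t : ℝ) / 2 - 1 ≤ ((t / 2 : ℕ) : ℝ) := by
        have : t ≤ 2 * (t / 2) + 1 := by omega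
        have : (t : ℝ) ≤ 2 * ((t / 2 : ℕ) : ℝ) + 1 := by exact_mod_cast this
        linarith
      have h4 : (r : ℝ) * (5 * l) ≤ 100 * x := by
        have h5 : (r : ℝ) * (5 * l) ≤ 513 * (q * l) * (5 * l) :=
          mul_le_mul_of_nonneg_right hrhi (by positivity)
        have h6 : 200 * (q * l ^ 2) ≤ l * (q * l ^ 2) :=
          mul_le_mul_of_nonneg_right hl200 (by positivity)
        have h7 : 513 * (q * l) * (5 * l) = 2565 * (q * l ^ 2) := by ring
        have h8 : l * (q * l ^ 2) = q * l ^ 3 := by ring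
        rw [h7] at h5
        rw [h8] at h6
        linarith
      calc ((q : ℝ) ^ 4 + 2) ^ r * Real.exp (200 * n / q ^ 2)
          ≤ Real.exp (r * (5 * l)) * Real.exp (200 * x) :=
            mul_le_mul h1 (Real.exp_le_exp.2 h2) (Real.exp_pos _).le (Real.exp_pos _).le
        _ = Real.exp (r * (5 * l) + 200 * x) := (Real.exp_add _ _).symm
        _ < Real.exp (((t / 2 : ℕ) : ℝ) / 2) := Real.exp_lt_exp.2 (by linarith)
        _ ≤ _ := hexp2 _
  calc (minFIndep F (⊤ : SimpleGraph (Fin 4)) n : ℝ) ≤ t := by exact_mod_cast hmain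
    _ ≤ 1601 * x := hthi
    _ = _ := by rw [hx]; ring
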